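/- Let K be a field, n ≥ 2, and let f(x_1,…,x_m) be a multilinear polynomial over K. Then Im(f) on M_n(K) is contained in the set of scalar matrices (i.e., f is a central polynomial for M_n(K)) if and only if f satisfies (S1). -/

import Mathlib

/-- Evaluation of the multilinear polynomial `f(x₁,…,x_m) = ∑_{σ ∈ S_m} α_σ x_{σ(1)}⋯x_{σ(m)}`
given by coefficients `α` at the tuple `a`. -/
def mlEval {K A : Type} [Field K] [Ring A] [Algebra K A] {m : ℕ}
    (α : Equiv.Perm (Fin m) → K) (a : Fin m → A) : A :=
  ∑ σ : Equiv.Perm (Fin m), α σ • (List.ofFn fun i => a (σ i)).prod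

/-- The image of the multilinear polynomial with coefficients `α` on the algebra `A`. -/
def mlImage {K A : Type} [Field K] [Ring A] [Algebra K A] {m : ℕ}
    (α : Equiv.Perm (Fin m) → K) : Set A :=
  Set.range (mlEval α)

/-- `a` is homogeneous of degree `g` in the Vasilovsky `ZMod n`-grading of `Mₙ(K)`:
`a` lies in the span of the matrix units `E i j` with `j - i ≡ g (mod n)`. -/
def VasHomog {K : Type} [Field K] {n : ℕ} (g : ZMod n)
    (a : Matrix (Fin n) (Fin n) K) : Prop :=
  ∀ i j : Fin n, ((j.val : ZMod n) - (i.val : ZMod n)) ≠ g → a i j = 0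

/-- Statement (S0): `f` vanishes on homogeneous tuples whose degrees sum to `0`. -/
def StmtS0 {K : Type} [Field K] (n : ℕ) {m : ℕ} (α : Equiv.Perm (Fin m) → K) : Prop :=
  ∀ (g : Fin m → ZMod n) (a : Fin m → Matrix (Fin n) (Fin n) K),
    (∀ i, VasHomog (g i) (a i)) → (∑ i, g i) = 0 → mlEval α a = 0

/-- Statement (S1): `f` vanishes on homogeneous tuples whose degrees sum to a nonzero element. -/
def StmtS1 {K : Type} [Field K] (n : ℕ) {m : ℕ} (α : Equiv.Perm (Fin m) → K) : Prop :=
  ∀ (g : Fin m → ZMod n) (a : Fin m → Matrix (Fin n) (Fin n) K),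
    (∀ i, VasHomog (g i) (a i)) → (∑ i, g i) ≠ 0 → mlEval α a = 0

/-- Statement (S2): `f` has trace-zero values on homogeneous tuples whose degrees sum to `0`. -/
def StmtS2 {K : Type} [Field K] (n : ℕ) {m : ℕ} (α : Equiv.Perm (Fin m) → K) : Prop :=
  ∀ (g : Fin m → ZMod n) (a : Fin m → Matrix (Fin n) (Fin n) K),
    (∀ i, VasHomog (g i) (a i)) → (∑ i, g i) = 0 → Matrix.trace (mlEval α a) = 0

/-- The set of scalar matrices in `Mₙ(K)`. -/
def scalarSet (K : Type) [Field K] (n : ℕ) : Set (Matrix (Fin n) (Fin n) K) :=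
  {b | ∃ c : K, b = c • (1 : Matrix (Fin n) (Fin n) K)}

/-- The set `slₙ(K)` of trace-zero matrices in `Mₙ(K)`. -/
def slSet (K : Type) [Field K] (n : ℕ) : Set (Matrix (Fin n) (Fin n) K) :=
  {b | Matrix.trace b = 0}

/-!
If `f` is central, a value of nonzero degree is a scalar matrix with zero diagonal, hence zero.
Conversely, expanding the arguments of `f` into homogeneous components and using (S1), every value
of `f` lies in the component of degree `0`, that is, in the diagonal matrices. The image of `f` is
stable under conjugation, and a matrix all of whose conjugates are diagonal is scalar: conjugating
by a transvection `1 + E i j` forces the `i`-th and `j`-th diagonal entries to agree.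
-/

section MultilinearPolynomial

variable {K A B : Type} [Field K] [Ring A] [Algebra K A] [Ring B] [Algebra K B] {m : ℕ}
  (α : Equiv.Perm (Fin m) → K)

/-- The multilinear polynomial with coefficients `α`, as a multilinear map on the algebra `A`. -/
noncomputable def mlMap : MultilinearMap K (fun _ : Fin m => A) A :=
  ∑ σ : Equiv.Perm (Fin m), α σ • (MultilinearMap.mkPiAlgebraFin K m A).domDomCongr σ

theorem mlMap_apply (a : Fin m → A) : mlMap α a = mlEval α a := by
  simp [mlMap, mlEval]

theorem map_mlEval (φ : A →ₐ[K] B) (a : Fin m → A) :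
    φ (mlEval α a) = mlEval α fun i => φ (a i) := by
  simp [mlEval, map_list_prod, List.map_ofFn, Function.comp_def]

theorem units_conj_mlEval (u : Aˣ) (a : Fin m → A) :
    ↑u * mlEval α a * ↑u⁻¹ = mlEval α fun i => ↑u * a i * ↑u⁻¹ :=
  map_mlEval α (MulSemiringAction.toAlgHom K A (ConjAct.toConjAct u)) a

variable {G : Type*} (𝒜 : G → Submodule K A)

theorem mlEval_mem_of_forall_homogeneous (h𝒜 : ⨆ g, 𝒜 g = ⊤) {N : Submodule K A}
    (hN : ∀ (g : Fin m → G) (a : Fin m → A), (∀ i, a i ∈ 𝒜 (g i)) → mlEval α a ∈ N)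
    (a : Fin m → A) : mlEval α a ∈ N := by
  classical
  have exists_components (i : Fin m) :
      ∃ c : G →₀ A, (∀ g, c g ∈ 𝒜 g) ∧ c.sum (fun _ x => x) = a i :=
    (Submodule.mem_iSup_iff_exists_finsupp 𝒜 (a i)).mp (h𝒜 ▸ Submodule.mem_top)
  choose c hc hsum using exists_components
  obtain rfl : (fun i => ∑ g ∈ (c i).support, c i g) = a := funext hsum
  rw [← mlMap_apply, MultilinearMap.map_sum_finset]
  refine Submodule.sum_mem _ fun g _ => ?_
  rw [mlMap_apply]
  exact hN g _ fun i => hc i (g i)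

variable [AddCommMonoid G]

theorem mlEval_mem_graded [SetLike.GradedMonoid 𝒜] {g : Fin m → G} {a : Fin m → A}
    (ha : ∀ i, a i ∈ 𝒜 (g i)) : mlEval α a ∈ 𝒜 (∑ i, g i) := by
  refine Submodule.sum_mem _ fun σ _ => Submodule.smul_mem _ _ ?_
  rw [← Equiv.sum_comp σ g, ← List.sum_ofFn]
  exact SetLike.list_prod_ofFn_mem_graded _ _ fun i => ha (σ i)

theorem mlEval_mem_zero_component [SetLike.GradedMonoid 𝒜] (h𝒜 : ⨆ g, 𝒜 g = ⊤)
    (hα : ∀ (g : Fin m → G) (a : Fin m → A),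
      (∀ i, a i ∈ 𝒜 (g i)) → ∑ i, g i ≠ 0 → mlEval α a = 0)
    (a : Fin m → A) : mlEval α a ∈ 𝒜 0 := by
  refine mlEval_mem_of_forall_homogeneous α 𝒜 h𝒜 (fun g b hb => ?_) a
  by_cases hg : ∑ i, g i = 0
  · exact hg ▸ mlEval_mem_graded α 𝒜 hb
  · exact hα g b hb hg ▸ Submodule.zero_mem _

end MultilinearPolynomial

section ElementaryGrading

variable {R ι G : Type*} [CommSemiring R] [AddCommGroup G]

/-- The elementary grading of the matrix algebra induced by `d : ι → G`: the component of degree `g`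
is spanned by the matrix units `E i j` with `d j - d i = g`. The Vasilovsky grading is the case
where `d : Fin n → ZMod n` is the cast. -/
def elementaryGrading (R : Type*) [CommSemiring R] (d : ι → G) (g : G) :
    Submodule R (Matrix ι ι R) where
  carrier := {a | ∀ i j, d j - d i ≠ g → a i j = 0}
  add_mem' ha hb i j hij := by rw [Matrix.add_apply, ha i j hij, hb i j hij, add_zero]
  zero_mem' _ _ _ := rfl
  smul_mem' c a ha i j hij := by rw [Matrix.smul_apply, ha i j hij, smul_zero]

theorem isDiag_of_mem_elementaryGrading_zero {d : ι → G} (hd : Function.Injective d)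
    {a : Matrix ι ι R} (ha : a ∈ elementaryGrading R d 0) : a.IsDiag :=
  fun i j hij => ha i j fun h => hij (hd (sub_eq_zero.mp h).symm)

theorem eq_zero_of_isDiag_of_mem_elementaryGrading {d : ι → G} {g : G} (hg : g ≠ 0)
    {a : Matrix ι ι R} (ha : a ∈ elementaryGrading R d g) (hdiag : a.IsDiag) : a = 0 := by
  ext i j
  obtain rfl | hij := eq_or_ne i j
  · exact ha i i fun h => hg (h ▸ sub_self _)
  · exact hdiag hij

theorem single_mem_elementaryGrading [DecidableEq ι] (d : ι → G) (i j : ι) (c : R) :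
    Matrix.single i j c ∈ elementaryGrading R d (d j - d i) := by
  intro k l hkl
  refine Matrix.single_apply_of_ne _ _ _ _ _ ?_
  rintro ⟨rfl, rfl⟩
  exact hkl rfl

theorem iSup_elementaryGrading [Finite ι] (d : ι → G) : ⨆ g, elementaryGrading R d g = ⊤ := by
  classical
  cases nonempty_fintype ι
  refine eq_top_iff.mpr fun a _ => ?_
  rw [Matrix.matrix_eq_sum_single a]
  exact Submodule.sum_mem _ fun i _ => Submodule.sum_mem _ fun j _ =>
    Submodule.mem_iSup_of_mem _ (single_mem_elementaryGrading d i j (a i j))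

instance elementaryGrading.gradedMonoid [Fintype ι] [DecidableEq ι] (d : ι → G) :
    SetLike.GradedMonoid (elementaryGrading R d) where
  one_mem i j hij := Matrix.one_apply_ne fun h => hij (h ▸ sub_self _)
  mul_mem g h a b ha hb i j hij := by
    rw [Matrix.mul_apply]
    refine Finset.sum_eq_zero fun k _ => ?_
    by_cases hik : d k - d i = g
    · have hkj : d j - d k ≠ h := fun hkj =>
        hij (by rw [← hik, ← hkj, add_comm, sub_add_sub_cancel])
      rw [hb k j hkj, mul_zero]
    · rw [ha i k hik, zero_mul]

end ElementaryGrading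

section Scalar

variable {R ι : Type*} [CommRing R] [Fintype ι] [DecidableEq ι]

theorem eq_of_semiconjBy_transvection_diagonal {i j : ι} (hij : i ≠ j) {v w : ι → R}
    (h : SemiconjBy (Matrix.transvection i j 1) (Matrix.diagonal v) (Matrix.diagonal w)) :
    v i = v j := by
  have apply_i_i : v i = w i := by
    simpa [Matrix.transvection, hij, hij.symm] using congr_fun₂ h.eq i i
  have apply_i_j : v j = w i := by
    simpa [Matrix.transvection, hij, hij.symm] using congr_fun₂ h.eq i j
  exact apply_i_i.trans apply_i_j.symm

theorem mem_range_scalar_of_forall_units_conj_isDiag {M : Matrix ι ι R}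
    (hM : ∀ u : (Matrix ι ι R)ˣ, (u.val * M * u⁻¹.val).IsDiag) :
    M ∈ Set.range (Matrix.scalar ι) := by
  obtain ⟨v, rfl⟩ : ∃ v, M = Matrix.diagonal v :=
    ⟨M.diag, (Matrix.IsDiag.diagonal_diag (by simpa using hM 1)).symm⟩
  have diagonal_const (i j : ι) : v i = v j := by
    obtain rfl | hij := eq_or_ne i j
    · rfl
    let t : Matrix.TransvectionStruct ι R := ⟨i, j, hij, 1⟩
    let u : (Matrix ι ι R)ˣ := ⟨t.toMatrix, t.inv.toMatrix, t.mul_inv, t.inv_mul⟩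
    have h_semiconj := Units.mk_semiconjBy u (Matrix.diagonal v)
    rw [← (hM u).diagonal_diag] at h_semiconj
    exact eq_of_semiconjBy_transvection_diagonal hij h_semiconj
  obtain _ | ⟨⟨i⟩⟩ := isEmpty_or_nonempty ι
  · exact ⟨0, Subsingleton.elim _ _⟩
  · exact ⟨v i, congr_arg Matrix.diagonal (funext (diagonal_const i))⟩

end Scalar

theorem scalarSet_eq_range_scalar (K : Type) [Field K] (n : ℕ) :
    scalarSet K n = Set.range (Matrix.scalar (Fin n)) := by
  ext b
  simp [scalarSet, Matrix.smul_one_eq_diagonal, eq_comm]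

theorem fin_natCast_zmod_injective (n : ℕ) :
    Function.Injective fun i : Fin n => ((i : ℕ) : ZMod n) := fun i j hij =>
  Fin.ext (((ZMod.natCast_eq_natCast_iff _ _ _).mp hij).eq_of_lt_of_lt i.isLt j.isLt)

theorem vasHomog_iff_mem_elementaryGrading {K : Type} [Field K] {n : ℕ} {g : ZMod n}
    {a : Matrix (Fin n) (Fin n) K} :
    VasHomog g a ↔ a ∈ elementaryGrading K (fun i : Fin n => ((i : ℕ) : ZMod n)) g :=
  Iff.rfl

theorem stmt_2_general {K ι : Type} {G : Type*} [Field K] [Fintype ι] [DecidableEq ι]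
    [AddCommGroup G] {d : ι → G} (hd : Function.Injective d) {m : ℕ}
    (α : Equiv.Perm (Fin m) → K) :
    (mlImage α : Set (Matrix ι ι K)) ⊆ Set.range (Matrix.scalar ι) ↔
      ∀ (g : Fin m → G) (a : Fin m → Matrix ι ι K),
        (∀ i, a i ∈ elementaryGrading K d (g i)) → ∑ i, g i ≠ 0 → mlEval α a = 0 := by
  constructor
  · intro central g a ha hg
    obtain ⟨c, hc⟩ := central ⟨a, rfl⟩
    have hdiag : (mlEval α a).IsDiag := hc ▸ Matrix.isDiag_diagonal _
    exact eq_zero_of_isDiag_of_mem_elementaryGrading hg (mlEval_mem_graded α _ ha) hdiag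
  · rintro hα _ ⟨a, rfl⟩
    refine mem_range_scalar_of_forall_units_conj_isDiag fun u => ?_
    rw [units_conj_mlEval]
    exact isDiag_of_mem_elementaryGrading_zero hd
      (mlEval_mem_zero_component α _ (iSup_elementaryGrading d) hα _)

/-- the image of a multilinear polynomial on `Mₙ(K)` is contained in the scalar
matrices (i.e. `f` is a central polynomial) iff `f` satisfies (S1). -/
theorem stmt_2 {K : Type} [Field K] (n : ℕ) (hn : 2 ≤ n) {m : ℕ}
    (α : Equiv.Perm (Fin m) → K) :
    (mlImage α : Set (Matrix (Fin n) (Fin n) K)) ⊆ scalarSet K n ↔ StmtS1 n α := by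
  simp only [scalarSet_eq_range_scalar, StmtS1, vasHomog_iff_mem_elementaryGrading]
  exact stmt_2_general (fin_natCast_zmod_injective n) α
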